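/- arXiv:1405.5293 — 2 statements merged into one kernel-verified Lean document; each statement's English description precedes it below -/
import Mathlib

section
/- For every ideal I of R = ℂ[x₁,…,xₙ] and every integer d ≥ 0, the dimension of the truncated dual space of I equals the colength of I plus the (d+1)-st power of the maximal ideal: dim_ℂ D₀^d[I] = dim_ℂ R₀/(IR₀ + m^{d+1}), where m = ⟨x₁,…,xₙ⟩. -/
open MvPolynomial

noncomputable section

/-- The polynomial ring `R = ℂ[x₁,…,xₙ]`. -/
abbrev Rn (n : ℕ) := MvPolynomial (Fin n) ℂ

/-- Total degree of a monomial exponent vector. -/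
def mdeg {n : ℕ} (m : Fin n →₀ ℕ) : ℕ := m.sum fun _ e => e

/-- The truncated dual space `D₀^d`: linear functionals on `R` vanishing on all
monomials of degree greater than `d` (identified with `(R_d)*`). -/
def DualTrunc (n d : ℕ) : Submodule ℂ (Module.Dual ℂ (Rn n)) where
  carrier := {p | ∀ m : Fin n →₀ ℕ, d < mdeg m → p (monomial m 1) = 0}
  add_mem' := by
    intro p q hp hq m hm
    simp [hp m hm, hq m hm]
  zero_mem' := by
    intro m hm
    simp
  smul_mem' := by
    intro c p hp m hm
    simp [hp m hm]

/-- The Macaulay dual space `D₀` at the origin: linear functionals on `R` vanishing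
on all monomials of sufficiently large degree, i.e. `⋃ d, D₀^d`. -/
def MacaulayDual (n : ℕ) : Submodule ℂ (Module.Dual ℂ (Rn n)) where
  carrier := {p | ∃ d : ℕ, ∀ m : Fin n →₀ ℕ, d < mdeg m → p (monomial m 1) = 0}
  add_mem' := by
    rintro p q ⟨d₁, hp⟩ ⟨d₂, hq⟩
    refine ⟨max d₁ d₂, fun m hm => ?_⟩
    simp [hp m (lt_of_le_of_lt (le_max_left _ _) hm),
          hq m (lt_of_le_of_lt (le_max_right _ _) hm)]
  zero_mem' := ⟨0, fun m _ => rfl⟩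
  smul_mem' := by
    rintro c p ⟨d, hp⟩
    exact ⟨d, fun m hm => by simp [hp m hm]⟩

/-- The space of linear functionals annihilating an ideal `I`. -/
def annIdeal {n : ℕ} (I : Ideal (Rn n)) : Submodule ℂ (Module.Dual ℂ (Rn n)) where
  carrier := {p | ∀ f ∈ I, p f = 0}
  add_mem' := by
    intro p q hp hq f hf
    simp [hp f hf, hq f hf]
  zero_mem' := by intro f _; rfl
  smul_mem' := by
    intro c p hp f hf
    simp [hp f hf]

/-- The Macaulay dual space `D₀[I] = {p ∈ D₀ : p(f) = 0 for all f ∈ I}`. -/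
def dualOf {n : ℕ} (I : Ideal (Rn n)) : Submodule ℂ (Module.Dual ℂ (Rn n)) :=
  MacaulayDual n ⊓ annIdeal I

/-- The truncated dual space `D₀^d[I] = D₀[I] ∩ D₀^d`. -/
def truncDualOf {n : ℕ} (I : Ideal (Rn n)) (d : ℕ) : Submodule ℂ (Module.Dual ℂ (Rn n)) :=
  DualTrunc n d ⊓ annIdeal I

/-- The contraction `IR₀ ∩ R` of the extension of `I` to the localization at the
origin: `{g ∈ R : ∃ h ∈ R with h(0) ≠ 0 and h·g ∈ I}`. -/
def contraction {n : ℕ} (I : Ideal (Rn n)) : Set (Rn n) :=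
  {g | ∃ h : Rn n, eval (0 : Fin n → ℂ) h ≠ 0 ∧ h * g ∈ I}

/-- The maximal ideal `m = ⟨x₁,…,xₙ⟩` at the origin, as the kernel of evaluation at `0`. -/
def mIdeal (n : ℕ) : Ideal (Rn n) := RingHom.ker (eval (0 : Fin n → ℂ))

instance (n : ℕ) : (mIdeal n).IsPrime := RingHom.ker_isPrime _

/-- The localization `R₀` of `R` at the maximal ideal of the origin. -/
abbrev Loc (n : ℕ) := Localization.AtPrime (mIdeal n)

/-- The extension `JR₀` of an ideal `J ⊆ R` to the localization `R₀`. -/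
def extIdeal {n : ℕ} (J : Ideal (Rn n)) : Ideal (Loc n) :=
  J.map (algebraMap (Rn n) (Loc n))

/-- Differentiation `σ_f : D₀ → D₀` by `f ∈ R`, `(σ_f p)(g) = p (f * g)`. -/
def sigma {n : ℕ} (f : Rn n) : Module.Dual ℂ (Rn n) →ₗ[ℂ] Module.Dual ℂ (Rn n) :=
  (LinearMap.mulLeft ℂ f).dualMap

/-- A graded monomial order on exponent vectors in `ℕⁿ`: a strict total order
compatible with addition and refining total degree. -/
structure IsGradedMonomialOrder {n : ℕ} (lt : (Fin n →₀ ℕ) → (Fin n →₀ ℕ) → Prop) : Prop where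
  irrefl : ∀ a, ¬ lt a a
  trans : ∀ a b c, lt a b → lt b c → lt a c
  total : ∀ a b, a ≠ b → lt a b ∨ lt b a
  add_compat : ∀ a b c, lt a b → lt (a + c) (b + c)
  deg_compat : ∀ a b, mdeg a < mdeg b → lt a b

/-- `β` is the lead monomial of `g` for the graded local order associated to `lt`:
the `lt`-minimal monomial of `g` with nonzero coefficient. -/
def IsLeadMonomial {n : ℕ} (lt : (Fin n →₀ ℕ) → (Fin n →₀ ℕ) → Prop)
    (g : Rn n) (β : Fin n →₀ ℕ) : Prop :=
  coeff β g ≠ 0 ∧ ∀ γ : Fin n →₀ ℕ, coeff γ g ≠ 0 → γ ≠ β → lt β γ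

/-- The initial ideal `in_≥(IR₀) ∩ R`: the monomial ideal of `R` generated by the
lead monomials of nonzero elements of the contraction `IR₀ ∩ R`. -/
def initialIdeal {n : ℕ} (lt : (Fin n →₀ ℕ) → (Fin n →₀ ℕ) → Prop)
    (I : Ideal (Rn n)) : Ideal (Rn n) :=
  Ideal.span {q | ∃ g ∈ contraction I, g ≠ 0 ∧
    ∃ β : Fin n →₀ ℕ, IsLeadMonomial lt g β ∧ q = monomial β 1}

/-- `∂^α` is (up to the scalar `p(x^α)`) the initial term of the dual functional `p`:
`α` is the `lt`-maximal monomial with nonzero coefficient in `p`. -/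
def IsInitialOf {n : ℕ} (lt : (Fin n →₀ ℕ) → (Fin n →₀ ℕ) → Prop)
    (p : Module.Dual ℂ (Rn n)) (α : Fin n →₀ ℕ) : Prop :=
  p (monomial α 1) ≠ 0 ∧ ∀ β : Fin n →₀ ℕ, p (monomial β 1) ≠ 0 → β ≠ α → lt β α

lemma mIdeal_eq (n : ℕ) : mIdeal n = idealOfVars (Fin n) ℂ := by
  ext p
  have h := mem_pow_idealOfVars_iff' (σ := Fin n) (R := ℂ) 1 p
  rw [pow_one] at h
  rw [h, mIdeal, RingHom.mem_ker]
  have e : eval (0 : Fin n → ℂ) p = coeff 0 p := by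
    rw [MvPolynomial.eval_zero, constantCoeff_eq]
  rw [e]
  constructor
  · intro h0 x hx
    have : x = 0 := by
      rw [← Finsupp.degree_eq_zero_iff]; omega
    rw [this]; exact h0
  · intro h0
    exact h0 0 (by simp)

lemma mdeg_eq {n : ℕ} (m : Fin n →₀ ℕ) : mdeg m = m.degree := rfl

lemma mIdeal_isMaximal (n : ℕ) : (mIdeal n).IsMaximal :=
  RingHom.ker_isMaximal_of_surjective _ fun c => ⟨C c, by simp⟩

lemma exists_inv_mod {n d : ℕ} (I : Ideal (Rn n)) (s : Rn n) (hs : s ∉ mIdeal n) :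
    ∃ t, 1 - t * s ∈ I ⊔ mIdeal n ^ (d + 1) := by
  obtain ⟨t, i, hi, h⟩ := (mIdeal_isMaximal n).exists_inv hs
  have h1 : Ideal.span {s} ⊔ mIdeal n = ⊤ := by
    rw [Ideal.eq_top_iff_one, ← h]
    exact Ideal.add_mem _ (Ideal.mem_sup_left (Ideal.mul_mem_left _ _
      (Ideal.mem_span_singleton_self s))) (Ideal.mem_sup_right hi)
  have h2 := Ideal.sup_pow_eq_top (n := d + 1) h1
  rw [Ideal.eq_top_iff_one, Submodule.mem_sup] at h2
  obtain ⟨y, hy, z, hz, hyz⟩ := h2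
  obtain ⟨a, rfl⟩ := Ideal.mem_span_singleton'.mp hy
  refine ⟨a, Ideal.mem_sup_right ?_⟩
  rw [← hyz]; simpa using hz

lemma truncDualOf_eq {n : ℕ} (I : Ideal (Rn n)) (d : ℕ) :
    truncDualOf I d =
      ((I ⊔ mIdeal n ^ (d + 1)).restrictScalars ℂ).dualAnnihilator := by
  ext p
  rw [Submodule.mem_dualAnnihilator]
  constructor
  · rintro ⟨h1, h2⟩ f hf
    obtain ⟨a, ha, b, hb, rfl⟩ := Submodule.mem_sup.mp hf
    rw [map_add, h2 a ha, zero_add]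
    rw [mIdeal_eq, mem_pow_idealOfVars_iff] at hb
    rw [b.as_sum, map_sum]
    refine Finset.sum_eq_zero fun m hm => ?_
    have : monomial m (coeff m b) = coeff m b • (monomial m 1 : Rn n) := by
      rw [smul_monomial, smul_eq_mul, mul_one]
    rw [this, map_smul, h1 m (by rw [mdeg_eq]; exact hb m hm), smul_zero]
  · intro h
    refine ⟨fun m hm => h _ (Ideal.mem_sup_right ?_), fun f hf => h _ (Ideal.mem_sup_left hf)⟩
    rw [mIdeal_eq, monomial_mem_pow_idealOfVars_iff _ _ one_ne_zero]
    exact hm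

lemma finite_quot {n : ℕ} (I : Ideal (Rn n)) (d : ℕ) :
    Module.Finite ℂ (Rn n ⧸ (I ⊔ mIdeal n ^ (d + 1)).restrictScalars ℂ) := by
  set J := (I ⊔ mIdeal n ^ (d + 1)).restrictScalars ℂ
  refine Module.Finite.of_surjective
    (J.mkQ.comp (restrictTotalDegree (Fin n) ℂ d).subtype) ?_
  rw [← LinearMap.range_eq_top, LinearMap.range_comp, Submodule.range_subtype, eq_top_iff,
    ← Submodule.range_mkQ J, LinearMap.range_eq_map]
  rintro _ ⟨f, -, rfl⟩
  rw [f.as_sum, map_sum]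
  refine Submodule.sum_mem _ fun m hm => ?_
  by_cases hd : m.degree ≤ d
  · refine ⟨_, ?_, rfl⟩
    rw [SetLike.mem_coe, mem_restrictTotalDegree]
    exact (totalDegree_monomial_le _ _).trans hd
  · have : J.mkQ (monomial m (coeff m f)) = 0 := by
      rw [Submodule.mkQ_apply, Submodule.Quotient.mk_eq_zero]
      refine Ideal.mem_sup_right ?_
      rw [mIdeal_eq, monomial_mem_pow_idealOfVars_iff _ _ (mem_support_iff.mp hm)]
      omega
    rw [this]; exact zero_mem _

/-- The natural map `R → R₀ / K`. -/
def toQuot {n : ℕ} (K : Ideal (Loc n)) : Rn n →ₗ[ℂ] (Loc n ⧸ K) :=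
  ((Ideal.Quotient.mkₐ ℂ K).comp (IsScalarTower.toAlgHom ℂ (Rn n) (Loc n))).toLinearMap

lemma toQuot_apply {n : ℕ} (K : Ideal (Loc n)) (x : Rn n) :
    toQuot K x = Ideal.Quotient.mk K (algebraMap (Rn n) (Loc n) x) := rfl

lemma ker_toQuot {n d : ℕ} (I : Ideal (Rn n)) :
    LinearMap.ker (toQuot (extIdeal (I ⊔ mIdeal n ^ (d + 1)))) =
      (I ⊔ mIdeal n ^ (d + 1)).restrictScalars ℂ := by
  ext x
  rw [LinearMap.mem_ker, toQuot_apply, Ideal.Quotient.eq_zero_iff_mem, extIdeal,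
    IsLocalization.algebraMap_mem_map_algebraMap_iff (mIdeal n).primeCompl,
    Submodule.restrictScalars_mem]
  constructor
  · rintro ⟨s, hs, h⟩
    obtain ⟨t, ht⟩ := exists_inv_mod (d := d) I s hs
    have : x = (1 - t * s) * x + t * (s * x) := by ring
    rw [this]
    exact Ideal.add_mem _ (Ideal.mul_mem_right _ _ ht) (Ideal.mul_mem_left _ _ h)
  · intro h
    exact ⟨1, one_mem _, by simpa using h⟩

lemma toQuot_surjective {n d : ℕ} (I : Ideal (Rn n)) :
    Function.Surjective (toQuot (extIdeal (I ⊔ mIdeal n ^ (d + 1)))) := by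
  intro y
  obtain ⟨y, rfl⟩ := Ideal.Quotient.mk_surjective y
  obtain ⟨a, s, rfl⟩ := IsLocalization.exists_mk'_eq (mIdeal n).primeCompl y
  obtain ⟨t, ht⟩ := exists_inv_mod (d := d) I s.1 s.2
  refine ⟨t * a, ?_⟩
  rw [toQuot_apply, eq_comm, Ideal.Quotient.eq,
    ← Ideal.unit_mul_mem_iff_mem _ (IsLocalization.map_units (Loc n) s), mul_sub,
    IsLocalization.mk'_spec', ← map_mul, ← map_sub]
  refine Ideal.mem_map_of_mem _ ?_
  have : a - s.1 * (t * a) = a * (1 - t * s.1) := by ring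
  rw [this]
  exact Ideal.mul_mem_left _ _ ht

/-- `dim_ℂ D₀^d[I] = dim_ℂ R₀/(IR₀ + m^{d+1})` for every `d ≥ 0`. -/
theorem dim_truncated_dual (n : ℕ) (I : Ideal (Rn n)) (d : ℕ) :
    Module.rank ℂ (truncDualOf I d)
      = Module.rank ℂ (Loc n ⧸ (extIdeal I + extIdeal (mIdeal n) ^ (d + 1))) := by
  have hK : extIdeal I + extIdeal (mIdeal n) ^ (d + 1) =
      extIdeal (I ⊔ mIdeal n ^ (d + 1)) := by
    simp only [extIdeal, Ideal.map_sup, Ideal.map_pow, Submodule.add_eq_sup]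
  rw [hK, truncDualOf_eq]
  have := finite_quot I d
  rw [← (Submodule.dualQuotEquivDualAnnihilator _).rank_eq, Module.dual_rank_eq,
    Cardinal.lift_id, ← ker_toQuot]
  exact (LinearMap.quotKerEquivOfSurjective _ (toQuot_surjective I)).rank_eq
end
end

section
/- Let I be an ideal of R = ℂ[x₁,…,xₙ] and let ≻ be a graded monomial order on ℕⁿ, with lead monomials in IR₀ taken ≻-minimal and initial terms in D₀ taken ≻-maximal as in the graded local order convention. Then the initial dual space equals the dual space of the initial ideal: the linear span of the initial terms of nonzero elements of D₀[I] equals D₀[in_≥(IR₀) ∩ R], where in_≥(IR₀) is the monomial ideal generated by the lead monomials of nonzero elements of the contraction IR₀ ∩ R. -/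
open MvPolynomial

noncomputable section

theorem mdeg_eq_degree {n : ℕ} (m : Fin n →₀ ℕ) : mdeg m = Finsupp.degree m := rfl

theorem dual_apply_eq_zero {n : ℕ} (p : Module.Dual ℂ (Rn n)) (f : Rn n)
    (h : ∀ m, coeff m f ≠ 0 → p (monomial m 1) = 0) : p f = 0 := by
  rw [f.as_sum, map_sum]
  refine Finset.sum_eq_zero fun m hm => ?_
  have : monomial m (coeff m f) = coeff m f • (monomial m (1 : ℂ)) := by
    rw [smul_monomial]; simp
  rw [this, map_smul, h m (mem_support_iff.1 hm), smul_zero]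

/-- A functional in `D₀[I]` kills the contraction of `I`. -/
theorem dualOf_contraction {n : ℕ} {I : Ideal (Rn n)} {p : Module.Dual ℂ (Rn n)}
    (hp : p ∈ dualOf I) {g : Rn n} (hg : g ∈ contraction I) : p g = 0 := by
  obtain ⟨⟨d, hd⟩, hI⟩ := hp
  obtain ⟨h, h0, hgI⟩ := hg
  let u : Rn n := 1 - C (eval (0 : Fin n → ℂ) h)⁻¹ * h
  have hu0 : coeff 0 u = 0 := by
    have : coeff 0 u = eval (0 : Fin n → ℂ) u := by
      rw [eval_zero, constantCoeff_eq]
    rw [this]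
    simp only [u, map_sub, map_one, map_mul, eval_C]
    rw [inv_mul_cancel₀ h0, sub_self]
  have hu : u ∈ idealOfVars (Fin n) ℂ := by
    rw [← pow_one (idealOfVars (Fin n) ℂ), mem_pow_idealOfVars_iff']
    intro x hx
    have : x = 0 := by
      rw [← Finsupp.degree_eq_zero_iff]; omega
    rw [this, hu0]
  have h1 : u ^ (d + 1) * g ∈ idealOfVars (Fin n) ℂ ^ (d + 1) :=
    Ideal.mul_mem_right _ _ (Ideal.pow_mem_pow hu _)
  rw [mem_pow_idealOfVars_iff'] at h1
  have h2 : p (u ^ (d + 1) * g) = 0 := by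
    refine dual_apply_eq_zero p _ fun m hm => hd m ?_
    by_contra hc
    exact hm (h1 m (by rw [mdeg_eq_degree] at hc; omega))
  have h3 : (∑ i ∈ Finset.range (d + 1), u ^ i) * C (eval (0 : Fin n → ℂ) h)⁻¹ * (h * g) ∈ I :=
    Ideal.mul_mem_left _ _ hgI
  have h4 : g = (∑ i ∈ Finset.range (d + 1), u ^ i) * C (eval (0 : Fin n → ℂ) h)⁻¹ * (h * g)
      + u ^ (d + 1) * g := by
    have h5 := geom_sum_mul_neg u (d + 1)
    have h6 : 1 - u = C (eval (0 : Fin n → ℂ) h)⁻¹ * h := by simp [u]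
    rw [h6] at h5
    linear_combination (-g) * h5
  rw [h4, map_add, h2, hI _ h3, add_zero]

/-- If `x^α` is not in the initial ideal, then `∂^α` is an initial term. -/
theorem exists_initial {n : ℕ} {I : Ideal (Rn n)}
    {lt : (Fin n →₀ ℕ) → (Fin n →₀ ℕ) → Prop} (hlt : IsGradedMonomialOrder lt)
    {α : Fin n →₀ ℕ} (hα : monomial α (1 : ℂ) ∉ initialIdeal lt I) :
    ∃ p ∈ dualOf I, IsInitialOf lt p α := by
  have hnot : monomial α (1 : ℂ) ∉
      I.restrictScalars ℂ ⊔ restrictSupport ℂ {β | lt α β} := by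
    intro hmem
    obtain ⟨g, hg, v, hv, hgv⟩ := Submodule.mem_sup.1 hmem
    rw [mem_restrictSupport_iff] at hv
    have hv' : ∀ γ, coeff γ v ≠ 0 → lt α γ := fun γ hγ => hv (mem_support_iff.2 hγ)
    have hga : g = monomial α 1 - v := by rw [← hgv]; ring
    have hva : coeff α v = 0 := by
      by_contra hc
      exact hlt.irrefl _ (hv' α hc)
    have hgα : coeff α g = 1 := by
      rw [hga, coeff_sub, hva, coeff_monomial]; simp
    apply hα
    refine Ideal.subset_span ⟨g, ⟨1, by simp, by simpa using hg⟩, ?_, α, ⟨?_, ?_⟩, rfl⟩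
    · rintro rfl
      simp at hgα
    · rw [hgα]; exact one_ne_zero
    · intro γ hγ hne
      apply hv'
      rw [hga, coeff_sub, coeff_monomial, if_neg (Ne.symm hne)] at hγ
      simpa using hγ
  obtain ⟨p, hpα, hp⟩ := Submodule.exists_le_ker_of_notMem hnot
  have hgt : ∀ β, lt α β → p (monomial β 1) = 0 := by
    intro β hβ
    refine hp (Submodule.mem_sup_right ?_)
    rw [mem_restrictSupport_iff]
    intro γ hγ
    have := support_monomial_subset hγ
    rw [Finset.mem_singleton] at this
    rw [this]
    exact hβ
  refine ⟨p, ⟨⟨mdeg α, fun m hm => hgt m (hlt.deg_compat _ _ hm)⟩, ?_⟩, hpα, ?_⟩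
  · intro f hf
    exact hp (Submodule.mem_sup_left hf)
  · intro β hβ hne
    rcases hlt.total β α hne with h | h
    · exact h
    · exact absurd (hgt β h) hβ

theorem initial_not_lead {n : ℕ} {I : Ideal (Rn n)}
    {lt : (Fin n →₀ ℕ) → (Fin n →₀ ℕ) → Prop} (hlt : IsGradedMonomialOrder lt)
    {p : Module.Dual ℂ (Rn n)} (hp : p ∈ dualOf I) {α β γ : Fin n →₀ ℕ}
    (hα : IsInitialOf lt p α) {g : Rn n} (hg : g ∈ contraction I)
    (hβ : IsLeadMonomial lt g β) : β + γ ≠ α := by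
  rintro rfl
  obtain ⟨h, h0, hgI⟩ := hg
  have hmem : monomial γ 1 * g ∈ contraction I :=
    ⟨h, h0, by rw [mul_left_comm]; exact Ideal.mul_mem_left _ _ hgI⟩
  have h1 := dualOf_contraction hp hmem
  have h2 : p (monomial γ 1 * g - coeff β g • monomial (β + γ) 1) = 0 := by
    refine dual_apply_eq_zero p _ fun m hm => ?_
    by_contra hpm
    by_cases hmα : m = β + γ
    · subst hmα
      apply hm
      rw [coeff_sub, add_comm β γ, coeff_monomial_mul, coeff_smul, coeff_monomial]
      simp
    · rw [coeff_sub, coeff_smul, coeff_monomial, if_neg (Ne.symm hmα), smul_zero, sub_zero,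
        coeff_monomial_mul'] at hm
      split_ifs at hm with hle
      · rw [one_mul] at hm
        have hne : m - γ ≠ β := by
          rintro rfl
          exact hmα (tsub_add_cancel_of_le hle).symm
        have h3 := hlt.add_compat _ _ γ (hβ.2 _ hm hne)
        rw [tsub_add_cancel_of_le hle] at h3
        exact hlt.irrefl _ (hlt.trans _ _ _ h3 (hα.2 m hpm hmα))
      · exact hm rfl
  rw [map_sub, h1, map_smul, zero_sub, neg_eq_zero, smul_eq_mul] at h2
  exact (mul_ne_zero hβ.1 hα.1) h2

theorem lcoeff_mem_dualOf {n : ℕ} {I : Ideal (Rn n)}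
    {lt : (Fin n →₀ ℕ) → (Fin n →₀ ℕ) → Prop} (hlt : IsGradedMonomialOrder lt)
    {p : Module.Dual ℂ (Rn n)} (hp : p ∈ dualOf I) {α : Fin n →₀ ℕ}
    (hα : IsInitialOf lt p α) : lcoeff ℂ α ∈ dualOf (initialIdeal lt I) := by
  constructor
  · refine ⟨mdeg α, fun m hm => ?_⟩
    rw [lcoeff_apply, coeff_monomial, if_neg]
    rintro rfl
    exact lt_irrefl _ hm
  · intro f hf
    rw [lcoeff_apply]
    revert hf
    refine fun hf => Submodule.span_induction
      (p := fun f _ => ∀ a : Rn n, coeff α (a * f) = 0) ?_ ?_ ?_ ?_ hf 1 |> fun h => by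
        simpa using h
    · rintro _ ⟨g, hg, -, β, hβ, rfl⟩ a
      rw [coeff_mul_monomial']
      split_ifs with hle
      · exact absurd (add_tsub_cancel_of_le hle) (initial_not_lead hlt hp hα hg hβ)
      · rfl
    · simp
    · intro x y _ _ hx hy a
      rw [mul_add, coeff_add, hx, hy, add_zero]
    · intro b x _ hx a
      rw [smul_eq_mul, ← mul_assoc, hx]

/-- the span of the initial terms of nonzero elements of `D₀[I]`
equals `D₀[in_≥(IR₀) ∩ R]`. The initial term of `p` with `lt`-maximal nonzero
monomial `α` is the functional `p(x^α) • ∂^α`. -/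
theorem initial_dual_eq_dual_of_initial_ideal (n : ℕ) (I : Ideal (Rn n))
    (lt : (Fin n →₀ ℕ) → (Fin n →₀ ℕ) → Prop) (hlt : IsGradedMonomialOrder lt) :
    Submodule.span ℂ {q : Module.Dual ℂ (Rn n) | ∃ p ∈ dualOf I, p ≠ 0 ∧
        ∃ α : Fin n →₀ ℕ, IsInitialOf lt p α ∧ q = p (monomial α 1) • (lcoeff ℂ α)}
      = dualOf (initialIdeal lt I) := by
  apply le_antisymm
  · rw [Submodule.span_le]
    rintro _ ⟨p, hp, -, α, hα, rfl⟩
    exact Submodule.smul_mem _ _ (lcoeff_mem_dualOf hlt hp hα)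
  · rintro q ⟨⟨d, hd⟩, hq⟩
    have hfin : {m : Fin n →₀ ℕ | mdeg m ≤ d}.Finite := Finsupp.finite_of_degree_le d
    have hsum : q = ∑ m ∈ hfin.toFinset, q (monomial m 1) • lcoeff ℂ m := by
      refine LinearMap.ext fun f => ?_
      rw [← sub_eq_zero, ← LinearMap.sub_apply]
      refine dual_apply_eq_zero _ f fun m _ => ?_
      rw [LinearMap.sub_apply, sub_eq_zero, LinearMap.sum_apply]
      simp only [LinearMap.smul_apply, lcoeff_apply, coeff_monomial, smul_eq_mul, mul_ite,
        mul_one, mul_zero]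
      rw [Finset.sum_ite_eq]
      split_ifs with hm
      · rfl
      · apply hd
        simpa using hm
    rw [hsum]
    refine Submodule.sum_mem _ fun m _ => ?_
    by_cases hm : q (monomial m 1) = 0
    · rw [hm, zero_smul]; exact Submodule.zero_mem _
    · apply Submodule.smul_mem
      obtain ⟨p, hp, hpm⟩ := exists_initial hlt (fun h => hm (hq _ h))
      have h1 : p (monomial m 1) • lcoeff ℂ m ∈ Submodule.span ℂ
          {q : Module.Dual ℂ (Rn n) | ∃ p ∈ dualOf I, p ≠ 0 ∧
            ∃ α : Fin n →₀ ℕ, IsInitialOf lt p α ∧ q = p (monomial α 1) • (lcoeff ℂ α)} := by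
        refine Submodule.subset_span ⟨p, hp, ?_, m, hpm, rfl⟩
        rintro rfl
        exact hpm.1 rfl
      exact (Submodule.smul_mem_iff _ hpm.1).1 h1
end
end
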